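/- Let S : ℝ^d → ℝ^d be a C¹ diffeomorphism, let ν be a Borel probability measure on ℝ^d and let μ = ν ∘ S^{−1}. Let b : ℝ^d → ℝ^d be a Borel vector field and let ρ be a solution of the continuity equation ∂ₜρ + div_ν(ρ·b) = 0 on [0,T] such that sup_{t∈[0,T]} ∫ ‖b‖ ρ(t,·) dν < ∞. Define c(y) = DS(S^{−1}(y)) · b(S^{−1}(y)) and g(t,y) = ρ(t, S^{−1}(y)). Then each g(t,·) is a probability density with respect to μ and g is a solution of the continuity equation ∂ₜg + div_μ(g·c) = 0 on [0,T]: for every ψ ∈ C_c^∞(ℝ^d) and t ∈ [0,T], ∫ ψ g(t,·) dμ = ∫ ψ g(0,·) dμ + ∫₀ᵗ ∫ ⟨c,∇ψ⟩ g(s,·) dμ ds. -/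

import Mathlib

open MeasureTheory Real Set

noncomputable section

/-- ℓ² norm of a vector in `Fin d → ℝ`. -/
def l2norm {d : ℕ} (v : Fin d → ℝ) : ℝ := Real.sqrt (∑ i, v i ^ 2)

/-- Test functions on ℝ^d. -/
def IsTest {d : ℕ} (φ : (Fin d → ℝ) → ℝ) : Prop :=
  ContDiff ℝ (⊤ : ℕ∞) φ ∧ HasCompactSupport φ

/-- i-th partial derivative. -/
def pd {d : ℕ} (i : Fin d) (f : (Fin d → ℝ) → ℝ) (x : Fin d → ℝ) : ℝ :=
  fderiv ℝ f x (Pi.single i 1)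

/-- Solution of the continuity equation `∂ₜρ + div_m(ρ·v) = 0` on `[0,T]`. -/
def IsSolution {d : ℕ} (m : Measure (Fin d → ℝ)) (v : (Fin d → ℝ) → Fin d → ℝ)
    (ρ : ℝ → (Fin d → ℝ) → ℝ) (T : ℝ) : Prop :=
  Measurable (Function.uncurry ρ) ∧
  (∀ t ∈ Icc (0:ℝ) T, (∀ᵐ x ∂m, 0 ≤ ρ t x) ∧ ∫ x, ρ t x ∂m = 1) ∧
  ∀ φ : (Fin d → ℝ) → ℝ, IsTest φ → ∀ t ∈ Icc (0:ℝ) T,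
    Integrable (fun q : ℝ × (Fin d → ℝ) => (∑ i, v q.2 i * pd i φ q.2) * ρ q.1 q.2)
      ((volume.restrict (Icc 0 t)).prod m) ∧
    ∫ x, φ x * ρ t x ∂m = ∫ x, φ x * ρ 0 x ∂m +
      ∫ s in Icc (0:ℝ) t, (∫ x, (∑ i, v x i * pd i φ x) * ρ s x ∂m)

/-! For `ψ` smooth and compactly supported, the chain rule turns the weak equation for the
transported density tested against `ψ` into the weak equation for `ρ` tested against `ψ ∘ S`, which
is compactly supported but only `C¹`. So the point is to extend the weak equation from smooth to
`C¹` test functions. Testing against cut-off coordinate functions shows that the momentum `ρ v` is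
integrable over `[0, t] × K` for every compact `K`. Mollifications of a `C¹` function with compact
support have uniformly bounded gradients that converge pointwise and are carried by a common compact
set, so dominated convergence passes to the limit in the weak equation. -/

open Filter Topology Function Metric
open scoped Convolution ContDiff

section Mollification

variable {E F : Type*} [NormedAddCommGroup E] [NormedSpace ℝ E] [FiniteDimensional ℝ E]
  [MeasurableSpace E] [BorelSpace E] [NormedAddCommGroup F] [NormedSpace ℝ F]

/-- The mollification `η ⋆ f` of `f` by a bump function `η`, normalised to have integral `1` with
respect to `μ`. -/
def mollify (η : ContDiffBump (0 : E)) (μ : Measure E) (f : E → F) : E → F :=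
  η.normed μ ⋆[ContinuousLinearMap.lsmul ℝ ℝ, μ] f

variable (η : ContDiffBump (0 : E)) (μ : Measure E) [μ.IsAddHaarMeasure] {f : E → F}

lemma contDiff_mollify (hf : LocallyIntegrable f μ) : ContDiff ℝ ∞ (mollify η μ f) :=
  η.hasCompactSupport_normed.contDiff_convolution_left _ η.contDiff_normed hf

lemma fderiv_mollify (hf : ContDiff ℝ 1 f) (hfc : HasCompactSupport f) :
    fderiv ℝ (mollify η μ f) = mollify η μ (fderiv ℝ f) :=
  funext fun x ↦ (hfc.hasFDerivAt_convolution_right (ContinuousLinearMap.lsmul ℝ ℝ)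
    η.continuous_normed.locallyIntegrable hf x).fderiv

variable [CompleteSpace F]

lemma norm_mollify_le {C : ℝ} (hC : 0 ≤ C) (hf : AEStronglyMeasurable f μ) {x : E}
    (hfC : ∀ y ∈ ball x η.rOut, ‖f y‖ ≤ C) : ‖mollify η μ f x‖ ≤ C := by
  rw [← dist_zero_right]
  exact dist_convolution_le hC η.support_normed_eq.subset η.nonneg_normed η.integral_normed hf
    fun y hy ↦ (dist_zero_right (f y)).trans_le (hfC y hy)

lemma tsupport_mollify_subset (hf : AEStronglyMeasurable f μ) :
    tsupport (mollify η μ f) ⊆ cthickening η.rOut (tsupport f) := by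
  refine closure_minimal (fun x hx ↦ ?_) isClosed_cthickening
  by_contra hxf
  refine hx (norm_le_zero_iff.mp (norm_mollify_le η μ le_rfl hf fun y hy ↦ ?_))
  have hyf : y ∉ tsupport f := fun h ↦
    hxf (mem_cthickening_of_dist_le x y _ _ h (mem_ball'.mp hy).le)
  rw [image_eq_zero_of_notMem_tsupport hyf, norm_zero]

end Mollification

section C1Approximation

variable {E F : Type*} [NormedAddCommGroup E] [NormedSpace ℝ E]
  [NormedAddCommGroup F] [NormedSpace ℝ F]

/-- Convergence of `u n` to `φ` in the sense needed to pass to the limit in a weak formulation by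
dominated convergence: the `u n` are supported in a common compact set, and `u n` and its derivative
are uniformly bounded and converge pointwise. -/
structure BoundedC1Tendsto (u : ℕ → E → F) (φ : E → F) : Prop where
  exists_isCompact : ∃ K, IsCompact K ∧ ∀ n, tsupport (u n) ⊆ K
  exists_norm_le : ∃ C, ∀ n x, ‖u n x‖ ≤ C
  exists_norm_fderiv_le : ∃ C, ∀ n x, ‖fderiv ℝ (u n) x‖ ≤ C
  tendsto : ∀ x, Tendsto (u · x) atTop (𝓝 (φ x))
  tendsto_fderiv : ∀ x, Tendsto (fun n ↦ fderiv ℝ (u n) x) atTop (𝓝 (fderiv ℝ φ x))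

lemma exists_seq_contDiffBump_tendsto_rOut {E : Type*} [NormedAddCommGroup E] (c : E) :
    ∃ η : ℕ → ContDiffBump c, (∀ n, (η n).rOut ≤ 1) ∧ Tendsto (fun n ↦ (η n).rOut) atTop (𝓝 0) := by
  have hr (n : ℕ) : (0 : ℝ) < 1 / ((n : ℝ) + 1) := Nat.one_div_pos_of_nat
  refine ⟨fun n ↦ ⟨_, _, half_pos (hr n), half_lt_self (hr n)⟩, fun n ↦ ?_,
    tendsto_one_div_add_atTop_nhds_zero_nat⟩
  simpa only [Nat.cast_zero, zero_add, div_one] using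
    Nat.one_div_le_one_div (α := ℝ) (Nat.zero_le n)

theorem exists_contDiff_boundedC1Tendsto [FiniteDimensional ℝ E] [CompleteSpace F] {φ : E → F}
    (hφ : ContDiff ℝ 1 φ) (hφc : HasCompactSupport φ) :
    ∃ u : ℕ → E → F, (∀ n, ContDiff ℝ ∞ (u n)) ∧ BoundedC1Tendsto u φ := by
  borelize E
  let μ : Measure E := .addHaar
  have hφ' : Continuous (fderiv ℝ φ) := hφ.continuous_fderiv one_ne_zero
  obtain ⟨C, hC⟩ := hφc.exists_bound_of_continuous hφ.continuous
  obtain ⟨C', hC'⟩ := (hφc.fderiv ℝ).exists_bound_of_continuous hφ'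
  obtain ⟨η, hη_le, hη_lim⟩ := exists_seq_contDiffBump_tendsto_rOut (0 : E)
  have hfderiv (n : ℕ) : fderiv ℝ (mollify (η n) μ φ) = mollify (η n) μ (fderiv ℝ φ) :=
    fderiv_mollify (η n) μ hφ hφc
  refine ⟨fun n ↦ mollify (η n) μ φ,
    fun n ↦ contDiff_mollify (η n) μ hφ.continuous.locallyIntegrable, ?_⟩
  constructor
  case exists_isCompact =>
    exact ⟨cthickening 1 (tsupport φ), hφc.isCompact.cthickening, fun n ↦
      (tsupport_mollify_subset (η n) μ hφ.continuous.aestronglyMeasurable).trans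
        (cthickening_mono (hη_le n) _)⟩
  case exists_norm_le =>
    exact ⟨C, fun n x ↦ norm_mollify_le (η n) μ ((norm_nonneg _).trans (hC x))
      hφ.continuous.aestronglyMeasurable fun y _ ↦ hC y⟩
  case exists_norm_fderiv_le =>
    refine ⟨C', fun n x ↦ ?_⟩
    rw [hfderiv]
    exact norm_mollify_le (η n) μ ((norm_nonneg _).trans (hC' x)) hφ'.aestronglyMeasurable
      fun y _ ↦ hC' y
  case tendsto =>
    exact ContDiffBump.convolution_tendsto_right_of_continuous hη_lim hφ.continuous
  case tendsto_fderiv =>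
    simp only [hfderiv]
    exact ContDiffBump.convolution_tendsto_right_of_continuous hη_lim hφ'

end C1Approximation

section ContinuousLinearMapApply

variable {X E F : Type*} [MeasurableSpace X] {μ : Measure X} {s : Set X} {w : X → E} {C : ℝ}
  [NormedAddCommGroup E] [NormedSpace ℝ E] [NormedAddCommGroup F] [NormedSpace ℝ F]

lemma integrable_clm_apply_of_support_subset {A : X → E →L[ℝ] F} (hA : AEStronglyMeasurable A μ)
    (hAC : ∀ x, ‖A x‖ ≤ C) (hAs : support A ⊆ s) (hw : IntegrableOn w s μ) :
    Integrable (fun x ↦ A x (w x)) μ := by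
  have hsupp : support (fun x ↦ A x (w x)) ⊆ s := fun x hx ↦
    hAs fun hAx ↦ hx (by simp only [hAx, zero_apply])
  rw [← integrableOn_iff_integrable_of_support_subset hsupp]
  exact (hw.norm.const_mul C).mono'
    ((ContinuousLinearMap.id ℝ (E →L[ℝ] F)).aestronglyMeasurable_comp₂ hA.restrict hw.1)
    (.of_forall fun x ↦ (A x).le_of_opNorm_le (hAC x) (w x))

lemma tendsto_integral_clm_apply {A : ℕ → X → E →L[ℝ] F} {B : X → E →L[ℝ] F}
    (hA : ∀ n, AEStronglyMeasurable (A n) μ) (hAC : ∀ n x, ‖A n x‖ ≤ C)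
    (hAs : ∀ n, support (A n) ⊆ s) (hAB : ∀ x, Tendsto (A · x) atTop (𝓝 (B x)))
    (hw : IntegrableOn w s μ) :
    Tendsto (fun n ↦ ∫ x, A n x (w x) ∂μ) atTop (𝓝 (∫ x, B x (w x) ∂μ)) := by
  have hA_zero (n : ℕ) (x : X) (hx : x ∉ s) : A n x = 0 := notMem_support.mp fun h ↦ hx (hAs n h)
  have hB_zero (x : X) (hx : x ∉ s) : B x = 0 :=
    tendsto_nhds_unique (hAB x) (by simp only [hA_zero _ x hx, tendsto_const_nhds])
  have hA_int (n : ℕ) : ∫ x in s, A n x (w x) ∂μ = ∫ x, A n x (w x) ∂μ :=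
    setIntegral_eq_integral_of_forall_compl_eq_zero fun x hx ↦ by
      rw [hA_zero n x hx, zero_apply]
  have hB_int : ∫ x in s, B x (w x) ∂μ = ∫ x, B x (w x) ∂μ :=
    setIntegral_eq_integral_of_forall_compl_eq_zero fun x hx ↦ by
      rw [hB_zero x hx, zero_apply]
  simp only [← hA_int, ← hB_int]
  exact tendsto_integral_of_dominated_convergence (fun x ↦ C * ‖w x‖)
    (fun n ↦ (integrable_clm_apply_of_support_subset (hA n) (hAC n) (hAs n) hw).1.restrict)
    (hw.norm.const_mul C)
    (fun n ↦ .of_forall fun x ↦ (A n x).le_of_opNorm_le (hAC n x) (w x))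
    (.of_forall fun x ↦
      ((ContinuousLinearMap.apply ℝ F (w x)).continuous.tendsto (B x)).comp (hAB x))

end ContinuousLinearMapApply

section WeakFormulation

variable {d : ℕ} {m : Measure (Fin d → ℝ)} {v : (Fin d → ℝ) → Fin d → ℝ}
  {ρ : ℝ → (Fin d → ℝ) → ℝ} {T t : ℝ} {φ : (Fin d → ℝ) → ℝ}

lemma sum_mul_pd (φ : (Fin d → ℝ) → ℝ) (x w : Fin d → ℝ) :
    ∑ i, w i * pd i φ x = fderiv ℝ φ x w := by
  conv_rhs => rw [pi_eq_sum_univ' w, map_sum]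
  simp only [map_smul, smul_eq_mul, pd]

/-- The measure `ds ⊗ m` on `[0, t] × ℝ^d`. -/
abbrev spaceTimeMeasure (m : Measure (Fin d → ℝ)) (t : ℝ) : Measure (ℝ × (Fin d → ℝ)) :=
  (volume.restrict (Icc 0 t)).prod m

/-- The momentum `ρ v`, as a vector field on space-time. -/
def momentum (v : (Fin d → ℝ) → Fin d → ℝ) (ρ : ℝ → (Fin d → ℝ) → ℝ) :
    ℝ × (Fin d → ℝ) → Fin d → ℝ :=
  fun q ↦ ρ q.1 q.2 • v q.2

lemma clm_apply_momentum (L : (Fin d → ℝ) →L[ℝ] ℝ) (q : ℝ × (Fin d → ℝ)) :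
    L (momentum v ρ q) = L (v q.2) * ρ q.1 q.2 := by
  rw [momentum, map_smul, smul_eq_mul, mul_comm]

/-- The weak continuity equation on `[0, t]` for a single test function `φ`, with the flux term
written as one integral over space-time of the momentum paired with the gradient of `φ`. -/
def WeakContinuityEq (m : Measure (Fin d → ℝ)) (v : (Fin d → ℝ) → Fin d → ℝ)
    (ρ : ℝ → (Fin d → ℝ) → ℝ) (t : ℝ) (φ : (Fin d → ℝ) → ℝ) : Prop :=
  Integrable (fun q ↦ fderiv ℝ φ q.2 (momentum v ρ q)) (spaceTimeMeasure m t) ∧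
    ∫ x, φ x * ρ t x ∂m = ∫ x, φ x * ρ 0 x ∂m +
      ∫ q, fderiv ℝ φ q.2 (momentum v ρ q) ∂(spaceTimeMeasure m t)

lemma weakContinuityEq_iff [SFinite m] :
    WeakContinuityEq m v ρ t φ ↔
      Integrable (fun q : ℝ × (Fin d → ℝ) ↦ (∑ i, v q.2 i * pd i φ q.2) * ρ q.1 q.2)
        (spaceTimeMeasure m t) ∧
      ∫ x, φ x * ρ t x ∂m = ∫ x, φ x * ρ 0 x ∂m +
        ∫ s in Icc (0 : ℝ) t, ∫ x, (∑ i, v x i * pd i φ x) * ρ s x ∂m := by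
  simp only [WeakContinuityEq, clm_apply_momentum, sum_mul_pd]
  exact and_congr_right fun h ↦ by rw [integral_prod _ h]

lemma exists_isTest_eventuallyEq {f : (Fin d → ℝ) → ℝ} (hf : ContDiff ℝ ∞ f)
    {K : Set (Fin d → ℝ)} (hK : IsCompact K) : ∃ φ, IsTest φ ∧ φ =ᶠ[𝓝ˢ K] f := by
  obtain ⟨r, hr, hKr⟩ := hK.isBounded.subset_ball_lt 0 0
  let χ : ContDiffBump (0 : Fin d → ℝ) := ⟨r, r + 1, hr, lt_add_one r⟩
  refine ⟨fun x ↦ χ x * f x, ⟨χ.contDiff.mul hf, χ.hasCompactSupport.mul_right⟩, ?_⟩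
  filter_upwards [isOpen_ball.mem_nhdsSet.mpr hKr] with x hx
  rw [χ.one_of_mem_closedBall (ball_subset_closedBall hx), one_mul]

namespace IsSolution

lemma integrable_density (hρ : IsSolution m v ρ T) (ht : t ∈ Icc 0 T) : Integrable (ρ t) m :=
  integrable_of_integral_eq_one (hρ.2.1 t ht).2

lemma integrableOn_momentum (hρ : IsSolution m v ρ T) (ht : t ∈ Icc 0 T)
    {K : Set (Fin d → ℝ)} (hK : IsCompact K) :
    IntegrableOn (momentum v ρ) (Prod.snd ⁻¹' K) (spaceTimeMeasure m t) := by
  refine Integrable.of_eval fun i ↦ ?_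
  let coord : (Fin d → ℝ) →L[ℝ] ℝ := ContinuousLinearMap.proj i
  obtain ⟨φ, hφ, hφ_eq⟩ := exists_isTest_eventuallyEq coord.contDiff hK
  refine (hρ.2.2 φ hφ t ht).1.integrableOn.congr_fun (fun q hq ↦ ?_)
    (hK.measurableSet.preimage measurable_snd)
  have hφ_nhds : φ =ᶠ[𝓝 q.2] coord := hφ_eq.filter_mono (nhds_le_nhdsSet hq)
  calc (∑ i, v q.2 i * pd i φ q.2) * ρ q.1 q.2
      = coord (v q.2) * ρ q.1 q.2 := by rw [sum_mul_pd, hφ_nhds.fderiv_eq, coord.fderiv]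
    _ = coord (momentum v ρ q) := (clm_apply_momentum coord q).symm

lemma integrable_fderiv_momentum (hρ : IsSolution m v ρ T) (ht : t ∈ Icc 0 T)
    (hφ : ContDiff ℝ 1 φ) (hφc : HasCompactSupport φ) :
    Integrable (fun q ↦ fderiv ℝ φ q.2 (momentum v ρ q)) (spaceTimeMeasure m t) := by
  have hφ' : Continuous (fderiv ℝ φ) := hφ.continuous_fderiv one_ne_zero
  obtain ⟨C, hC⟩ := (hφc.fderiv ℝ).exists_bound_of_continuous hφ'
  have hφ_supp : support (fun q : ℝ × (Fin d → ℝ) ↦ fderiv ℝ φ q.2) ⊆ Prod.snd ⁻¹' tsupport φ :=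
    fun _ hq ↦ support_fderiv_subset ℝ hq
  exact integrable_clm_apply_of_support_subset (hφ'.comp continuous_snd).aestronglyMeasurable
    (fun q ↦ hC q.2) hφ_supp (hρ.integrableOn_momentum ht hφc.isCompact)

lemma tendsto_integral_mul_density (hρ : IsSolution m v ρ T) (ht : t ∈ Icc 0 T)
    {u : ℕ → (Fin d → ℝ) → ℝ} (hu : ∀ n, Continuous (u n)) (huφ : BoundedC1Tendsto u φ) :
    Tendsto (fun n ↦ ∫ x, u n x * ρ t x ∂m) atTop (𝓝 (∫ x, φ x * ρ t x ∂m)) := by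
  have hρt := hρ.integrable_density ht
  obtain ⟨C, hC⟩ := huφ.exists_norm_le
  refine tendsto_integral_of_dominated_convergence (fun x ↦ C * ‖ρ t x‖)
    (fun n ↦ (hu n).aestronglyMeasurable.mul hρt.1) (hρt.norm.const_mul C)
    (fun n ↦ .of_forall fun x ↦ ?_) (.of_forall fun x ↦ (huφ.tendsto x).mul_const _)
  rw [norm_mul]
  exact mul_le_mul_of_nonneg_right (hC n x) (norm_nonneg _)

lemma tendsto_integral_fderiv_momentum (hρ : IsSolution m v ρ T) (ht : t ∈ Icc 0 T)
    {u : ℕ → (Fin d → ℝ) → ℝ} (hu : ∀ n, ContDiff ℝ 1 (u n)) (huφ : BoundedC1Tendsto u φ) :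
    Tendsto (fun n ↦ ∫ q, fderiv ℝ (u n) q.2 (momentum v ρ q) ∂(spaceTimeMeasure m t)) atTop
      (𝓝 (∫ q, fderiv ℝ φ q.2 (momentum v ρ q) ∂(spaceTimeMeasure m t))) := by
  obtain ⟨K, hK, huK⟩ := huφ.exists_isCompact
  obtain ⟨C, hC⟩ := huφ.exists_norm_fderiv_le
  have hu_meas (n : ℕ) : AEStronglyMeasurable (fun q : ℝ × (Fin d → ℝ) ↦ fderiv ℝ (u n) q.2)
      (spaceTimeMeasure m t) :=
    (((hu n).continuous_fderiv one_ne_zero).comp continuous_snd).aestronglyMeasurable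
  have hu_supp (n : ℕ) :
      support (fun q : ℝ × (Fin d → ℝ) ↦ fderiv ℝ (u n) q.2) ⊆ Prod.snd ⁻¹' K :=
    fun _ hq ↦ huK n (support_fderiv_subset ℝ hq)
  exact tendsto_integral_clm_apply hu_meas (fun n q ↦ hC n q.2) hu_supp
    (fun q ↦ huφ.tendsto_fderiv q.2) (hρ.integrableOn_momentum ht hK)

theorem weakContinuityEq [SFinite m] (hρ : IsSolution m v ρ T) (ht : t ∈ Icc 0 T)
    (hφ : ContDiff ℝ 1 φ) (hφc : HasCompactSupport φ) : WeakContinuityEq m v ρ t φ := by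
  refine ⟨hρ.integrable_fderiv_momentum ht hφ hφc, ?_⟩
  obtain ⟨u, hu, huφ⟩ := exists_contDiff_boundedC1Tendsto hφ hφc
  obtain ⟨K, hK, huK⟩ := huφ.exists_isCompact
  have hu_test (n : ℕ) : IsTest (u n) :=
    ⟨hu n, hK.of_isClosed_subset (isClosed_tsupport _) (huK n)⟩
  have hu_eq (n : ℕ) := (weakContinuityEq_iff.mpr (hρ.2.2 _ (hu_test n) t ht)).2
  have h0 : (0 : ℝ) ∈ Icc 0 T := left_mem_Icc.mpr (ht.1.trans ht.2)
  have hlim_density {s : ℝ} (hs : s ∈ Icc 0 T) :=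
    hρ.tendsto_integral_mul_density hs (fun n ↦ (hu n).continuous) huφ
  have hlim_flux := hρ.tendsto_integral_fderiv_momentum ht (fun n ↦ (hu n).of_le (by simp)) huφ
  exact tendsto_nhds_unique ((hlim_density ht).congr hu_eq) ((hlim_density h0).add hlim_flux)

end IsSolution

end WeakFormulation

section Transfer

variable {d n : ℕ} {S : (Fin d → ℝ) → Fin n → ℝ} {Sinv : (Fin n → ℝ) → Fin d → ℝ}
  {ν : Measure (Fin d → ℝ)} [SFinite ν] {b : (Fin d → ℝ) → Fin d → ℝ}
  {ρ : ℝ → (Fin d → ℝ) → ℝ}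

lemma spaceTimeMeasure_map (hS : Measurable S) (t : ℝ) :
    spaceTimeMeasure (ν.map S) t = (spaceTimeMeasure ν t).map (Prod.map id S) := by
  rw [← Measure.map_prod_map _ _ measurable_id hS, Measure.map_id]

lemma weakContinuityEq_map_iff (hS : Differentiable ℝ S) (hSe : MeasurableEmbedding S)
    (hleft : LeftInverse Sinv S) {t : ℝ} {ψ : (Fin n → ℝ) → ℝ} (hψ : Differentiable ℝ ψ) :
    WeakContinuityEq (ν.map S) (fun y ↦ fderiv ℝ S (Sinv y) (b (Sinv y)))
      (fun t y ↦ ρ t (Sinv y)) t ψ ↔ WeakContinuityEq ν b ρ t (ψ ∘ S) := by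
  have hSe' : MeasurableEmbedding (Prod.map (id : ℝ → ℝ) S) := MeasurableEmbedding.id.prodMap hSe
  have hchain (x w : Fin d → ℝ) : fderiv ℝ ψ (S x) (fderiv ℝ S x w) = fderiv ℝ (ψ ∘ S) x w := by
    rw [fderiv_comp x (hψ _) (hS x), ContinuousLinearMap.comp_apply]
  simp only [WeakContinuityEq, spaceTimeMeasure_map hSe.measurable, hSe'.integrable_map_iff,
    hSe'.integral_map, hSe.integral_map, clm_apply_momentum, comp_def, Prod.map_fst, Prod.map_snd,
    id_eq, hleft _, hchain]

theorem stmt13_general (hS : ContDiff ℝ 1 S) (hSe : IsClosedEmbedding S) (hSinv : Measurable Sinv)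
    (hleft : LeftInverse Sinv S) {T : ℝ} (hρ : IsSolution ν b ρ T) :
    IsSolution (ν.map S) (fun y ↦ fderiv ℝ S (Sinv y) (b (Sinv y)))
      (fun t y ↦ ρ t (Sinv y)) T := by
  have hSm : MeasurableEmbedding S := hSe.measurableEmbedding
  refine ⟨hρ.1.comp (measurable_id.prodMap hSinv), fun t ht ↦ ?_, fun ψ hψ t ht ↦ ?_⟩
  · simpa only [hSm.ae_map_iff, hSm.integral_map, hleft _] using hρ.2.1 t ht
  · have hψ₁ : ContDiff ℝ 1 ψ := hψ.1.of_le (by simp)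
    have hweak : WeakContinuityEq ν b ρ t (ψ ∘ S) :=
      hρ.weakContinuityEq ht (hψ₁.comp hS) (hψ.2.comp_isClosedEmbedding hSe)
    exact weakContinuityEq_iff.mp ((weakContinuityEq_map_iff (hS.differentiable one_ne_zero) hSm
      hleft (hψ₁.differentiable one_ne_zero)).mpr hweak)

end Transfer

/-- (Transfer of solutions.) Let `S : ℝ^d → ℝ^d` be a `C¹`
diffeomorphism with inverse `Sinv`, `ν` a Borel probability measure, `μ = ν ∘ S⁻¹`,
`b` a Borel vector field and `ρ` a solution of `∂ₜρ + div_ν(ρ·b) = 0` on `[0,T]` with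
`sup_{t∈[0,T]} ∫ ‖b‖ ρ(t,·) dν < ∞`. Then `g(t,y) = ρ(t, S⁻¹(y))` is a solution of
`∂ₜg + div_μ(g·c) = 0` on `[0,T]`, where `c(y) = DS(S⁻¹(y))·b(S⁻¹(y))`. -/
theorem stmt13 (d : ℕ) (S Sinv : (Fin d → ℝ) → Fin d → ℝ)
    (hS : ContDiff ℝ 1 S) (hSinv : ContDiff ℝ 1 Sinv)
    (hleft : Function.LeftInverse Sinv S) (hright : Function.RightInverse Sinv S)
    (ν : Measure (Fin d → ℝ)) (hνP : IsProbabilityMeasure ν)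
    (μ : Measure (Fin d → ℝ)) (hμ : μ = ν.map S)
    (b : (Fin d → ℝ) → Fin d → ℝ) (hbmeas : Measurable b)
    (T : ℝ) (hT : 0 < T)
    (ρ : ℝ → (Fin d → ℝ) → ℝ) (hρ : IsSolution ν b ρ T)
    (hbρ : ∃ M : ℝ, ∀ t ∈ Icc (0:ℝ) T, ∫ x, l2norm (b x) * ρ t x ∂ν ≤ M) :
    IsSolution μ (fun y => fderiv ℝ S (Sinv y) (b (Sinv y)))
      (fun t y => ρ t (Sinv y)) T := by
  subst hμ
  exact stmt13_general hS (hleft.isClosedEmbedding hSinv.continuous hS.continuous)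
    hSinv.continuous.measurable hleft hρ

end
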